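/- Let P be a polynomial with real coefficients of degree n and let σ : {0, 1, …, n} → {−1, 0, 1} be a sign condition. Then the set R(σ) = {x ∈ ℝ : sign(P^{(i)}(x)) = σ(i) for all 0 ≤ i ≤ n} is convex; in particular it is empty, a single point, or an interval. -/

import Mathlib

theorem thom_sign_mono {a b : ℝ} (h : a ≤ b) : Real.sign a ≤ Real.sign b := by
  unfold Real.sign
  split_ifs <;> linarith

theorem thom_sign_nonneg {a b : ℝ} (h : Real.sign a = Real.sign b) (hb : 0 ≤ b) : 0 ≤ a := by
  by_contra ha
  push Not at ha
  rw [Real.sign_of_neg ha] at h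
  have := thom_sign_mono hb
  rw [Real.sign_zero] at this
  linarith

theorem thom_sign_nonpos {a b : ℝ} (h : Real.sign a = Real.sign b) (hb : b ≤ 0) : a ≤ 0 := by
  by_contra ha
  push Not at ha
  rw [Real.sign_of_pos ha] at h
  have := thom_sign_mono hb
  rw [Real.sign_zero] at this
  linarith

theorem thom_aux (n : ℕ) : ∀ (P : Polynomial ℝ), P.natDegree ≤ n → ∀ x y : ℝ,
    (∀ i : ℕ, Real.sign ((Polynomial.derivative^[i] P).eval x) =
      Real.sign ((Polynomial.derivative^[i] P).eval y)) →
    ∀ z ∈ Set.Icc x y, ∀ i : ℕ, Real.sign ((Polynomial.derivative^[i] P).eval z) =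
      Real.sign ((Polynomial.derivative^[i] P).eval x) := by
  induction n with
  | zero =>
    intro P hP x y _ z _ i
    rw [Polynomial.eq_C_of_natDegree_le_zero hP]
    cases i with
    | zero => simp
    | succ j => simp [Function.iterate_succ_apply]
  | succ n ih =>
    intro P hP x y h z hz i
    have key := ih (Polynomial.derivative P)
      (by have := Polynomial.natDegree_derivative_le P; omega) x y (fun i => h (i + 1))
    cases i with
    | succ j => exact key z hz j
    | zero =>
      have k0 := fun w hw => key w hw 0
      have h0 := h 0
      simp only [Function.iterate_zero, id] at k0 h0 ⊢
      have hxy : x ≤ y := hz.1.trans hz.2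
      rcases le_total 0 ((Polynomial.derivative P).eval x) with hs | hs
      · have hm : MonotoneOn (fun t => P.eval t) (Set.Icc x y) := by
          apply monotoneOn_of_deriv_nonneg (convex_Icc x y) P.continuous.continuousOn
            P.differentiable.differentiableOn
          intro w hw
          rw [Polynomial.deriv]
          exact thom_sign_nonneg (k0 w (interior_subset hw)) hs
        have h1 := thom_sign_mono (hm (Set.left_mem_Icc.2 hxy) hz hz.1)
        have h2 := thom_sign_mono (hm hz (Set.right_mem_Icc.2 hxy) hz.2)
        simp only at h1 h2
        linarith
      · have hm : AntitoneOn (fun t => P.eval t) (Set.Icc x y) := by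
          apply antitoneOn_of_deriv_nonpos (convex_Icc x y) P.continuous.continuousOn
            P.differentiable.differentiableOn
          intro w hw
          rw [Polynomial.deriv]
          exact thom_sign_nonpos (k0 w (interior_subset hw)) hs
        have h1 := thom_sign_mono (hm (Set.left_mem_Icc.2 hxy) hz hz.1)
        have h2 := thom_sign_mono (hm hz (Set.right_mem_Icc.2 hxy) hz.2)
        simp only at h1 h2
        linarith

/-- Thom's lemma: for a real polynomial `P` of degree `n` and a sign condition
`σ : {0,…,n} → {−1,0,1}`, the realization
`R(σ) = {x ∈ ℝ : sign(P^{(i)}(x)) = σ(i), 0 ≤ i ≤ n}` is convex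
(hence empty, a point, or an interval). -/
theorem thom_lemma_realization_convex
    (P : Polynomial ℝ) (σ : ℕ → ℝ)
    (hσ : ∀ i : ℕ, σ i = -1 ∨ σ i = 0 ∨ σ i = 1) :
    Convex ℝ {x : ℝ | ∀ i : ℕ, i ≤ P.natDegree →
      Real.sign ((Polynomial.derivative^[i] P).eval x) = σ i} := by
  apply Set.OrdConnected.convex
  constructor
  intro x hx y hy z hz i hi
  rw [← hx i hi]
  refine thom_aux P.natDegree P le_rfl x y (fun j => ?_) z hz i
  by_cases hj : j ≤ P.natDegree
  · rw [hx j hj, hy j hj]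
  · rw [Polynomial.iterate_derivative_eq_zero (by omega)]
    simp
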